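/- For all real numbers a, b and all complex numbers s, r with Re(s) > |a| and Re(r) > |b|, the double complex EE transform of f(x,t) = cosh(a x + b t) equals (s r + a b)/((s² − a²)(r² − b²)); that is, ∫₀^∞ ∫₀^∞ cosh(a x + b t) e^{-(s x + r t)} dt dx = (s r + a b)/((s² − a²)(r² − b²)). (In the paper's variables s = iuⁿ, r = ivⁿ this is the formula D_EE{cosh(ax+bt)} = (ab − (uv)ⁿ)/((a² + u^{2n})(b² + v^{2n})).) -/

import Mathlib

open MeasureTheory

theorem aux_two_exp (p q C D : ℂ) (hp : p.re < 0) (hq : q.re < 0) :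
    (∫ x in Set.Ioi (0 : ℝ), (C * Complex.exp (p * (x : ℂ)) + D * Complex.exp (q * (x : ℂ))))
      = -C / p + -D / q := by
  rw [MeasureTheory.integral_add ((integrableOn_exp_mul_complex_Ioi hp 0).const_mul C)
    ((integrableOn_exp_mul_complex_Ioi hq 0).const_mul D),
    MeasureTheory.integral_const_mul, MeasureTheory.integral_const_mul,
    integral_exp_mul_complex_Ioi hp, integral_exp_mul_complex_Ioi hq]
  simp only [Complex.ofReal_zero, mul_zero, Complex.exp_zero]
  ring

/-- The double complex EE transform of `f(x,t) = cosh(a x + b t)`: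
`∫₀^∞ ∫₀^∞ cosh(a x + b t) e^{-(s x + r t)} dt dx = (s r + a b)/((s² - a²)(r² - b²))`
for `Re s > |a|`, `Re r > |b|`. -/
theorem double_EE_transform_cosh (a b : ℝ) (s r : ℂ) (hs : |a| < s.re) (hr : |b| < r.re) :
    (∫ x in Set.Ioi (0 : ℝ), ∫ t in Set.Ioi (0 : ℝ),
      (Real.cosh (a * x + b * t) : ℂ) * Complex.exp (-(s * x + r * t)))
      = (s * r + (a : ℂ) * b) / ((s ^ 2 - (a : ℂ) ^ 2) * (r ^ 2 - (b : ℂ) ^ 2)) := by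
  obtain ⟨hs1, hs2⟩ := abs_lt.mp hs
  obtain ⟨hr1, hr2⟩ := abs_lt.mp hr
  have p1 : ((a : ℂ) - s).re < 0 := by simp; linarith
  have p2 : (-(a : ℂ) - s).re < 0 := by simp; linarith
  have q1 : ((b : ℂ) - r).re < 0 := by simp; linarith
  have q2 : (-(b : ℂ) - r).re < 0 := by simp; linarith
  have inner : ∀ x : ℝ, (∫ t in Set.Ioi (0 : ℝ),
      (Real.cosh (a * x + b * t) : ℂ) * Complex.exp (-(s * x + r * t)))
      = (-(1 / 2) / ((b : ℂ) - r)) * Complex.exp (((a : ℂ) - s) * x)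
        + (-(1 / 2) / (-(b : ℂ) - r)) * Complex.exp ((-(a : ℂ) - s) * x) := by
    intro x
    have h := aux_two_exp ((b : ℂ) - r) (-(b : ℂ) - r)
      (1 / 2 * Complex.exp (((a : ℂ) - s) * x)) (1 / 2 * Complex.exp ((-(a : ℂ) - s) * x)) q1 q2
    have e : ∀ t : ℝ, (Real.cosh (a * x + b * t) : ℂ) * Complex.exp (-(s * x + r * t))
        = 1 / 2 * Complex.exp (((a : ℂ) - s) * x) * Complex.exp (((b : ℂ) - r) * t)
        + 1 / 2 * Complex.exp ((-(a : ℂ) - s) * x) * Complex.exp ((-(b : ℂ) - r) * t) := by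
      intro t
      rw [mul_assoc, mul_assoc, ← Complex.exp_add, ← Complex.exp_add, Complex.ofReal_cosh,
        Complex.cosh, div_mul_eq_mul_div, add_mul, ← Complex.exp_add, ← Complex.exp_add]
      push_cast
      ring_nf
    simp_rw [e]
    rw [h]
    ring
  simp_rw [inner]
  rw [aux_two_exp _ _ _ _ p1 p2]
  have n1 : (a : ℂ) - s ≠ 0 := fun h => by simp [h] at p1
  have n2 : -(a : ℂ) - s ≠ 0 := fun h => by simp [h] at p2
  have n3 : (b : ℂ) - r ≠ 0 := fun h => by simp [h] at q1
  have n4 : -(b : ℂ) - r ≠ 0 := fun h => by simp [h] at q2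
  have f1 : s ^ 2 - (a : ℂ) ^ 2 = ((a : ℂ) - s) * (-(a : ℂ) - s) := by ring
  have f2 : r ^ 2 - (b : ℂ) ^ 2 = ((b : ℂ) - r) * (-(b : ℂ) - r) := by ring
  rw [f1, f2]
  field_simp
  ring
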